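/- Let G be a finite cyclic group of squarefree order r = p_1⋯p_t with p_1, …, p_t distinct primes, let τ be a generator of G, and let I := Ψ_r(τ)·Z[G] be the ideal of Z[G] generated by Ψ_r(τ). For each i, let H_i be the unique subgroup of G of order p_i, so that G = H_1 × ⋯ × H_t internally, and let π_i : G → H_i be the corresponding projection. For a permutation σ of the set G, let σ̂ denote the Z-linear automorphism of Z[G] determined by σ̂(g) = σ(g) for all g ∈ G. Then σ̂(I) ⊆ I if and only if there exist permutations τ_1, …, τ_t of the sets H_1, …, H_t respectively such that σ(g) = τ_1(π_1(g))·τ_2(π_2(g))⋯τ_t(π_t(g)) for every g ∈ G. -/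

import Mathlib

open Polynomial

noncomputable section

/-- `Ψ_r(X) := (X^r − 1)/Φ_r(X) ∈ ℤ[X]`. -/
def PsiPoly (r : ℕ) : ℤ[X] := (X ^ r - 1) /ₘ cyclotomic r ℤ

theorem PsiPoly_eq_prod {r : ℕ} (hr : 0 < r) :
    PsiPoly r = ∏ d ∈ r.properDivisors, cyclotomic d ℤ := by
  rw [PsiPoly, ← prod_cyclotomic_eq_X_pow_sub_one hr, ← Nat.cons_self_properDivisors hr.ne',
    Finset.prod_cons, mul_divByMonic_cancel_left _ (cyclotomic.monic r ℤ)]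

theorem prod_cyclotomic_dvd (s : Finset ℕ) (f : ℤ[X]) (h : ∀ d ∈ s, cyclotomic d ℤ ∣ f) :
    ∏ d ∈ s, cyclotomic d ℤ ∣ f := by
  rw [← Polynomial.map_dvd_map (Int.castRingHom ℚ) Int.cast_injective
    (monic_prod_of_monic _ _ fun d _ => cyclotomic.monic d ℤ), Polynomial.map_prod]
  refine Finset.prod_dvd_of_coprime (fun a _ b _ hab => ?_) fun d hd =>
    Polynomial.map_dvd _ (h d hd)
  simpa [Function.onFun] using cyclotomic.isCoprime_rat hab

theorem PsiPoly_dvd_iff {ι : Type*} [Fintype ι] (p : ι → ℕ) (hp : ∀ i, (p i).Prime)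
    {r : ℕ} (hr : r = ∏ i, p i) (f : ℤ[X]) :
    PsiPoly r ∣ f ↔ ∀ i, (X ^ (r / p i) - 1 : ℤ[X]) ∣ f := by
  have hr0 : 0 < r := hr ▸ Finset.prod_pos fun i _ => (hp i).pos
  have hpr (i : ι) : p i ∣ r := hr ▸ Finset.dvd_prod_of_mem p (Finset.mem_univ i)
  have hm (i : ι) : 0 < r / p i := Nat.div_pos (Nat.le_of_dvd hr0 (hpr i)) (hp i).pos
  rw [PsiPoly_eq_prod hr0]
  refine ⟨fun h i => dvd_trans ?_ h, fun h => prod_cyclotomic_dvd _ _ fun d hd => ?_⟩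
  · rw [← prod_cyclotomic_eq_X_pow_sub_one (hm i)]
    refine Finset.prod_dvd_prod_of_subset _ _ _ fun d hd => ?_
    rw [Nat.mem_divisors] at hd
    exact Nat.mem_properDivisors.2 ⟨hd.1.trans (Nat.div_dvd_of_dvd (hpr i)),
      (Nat.le_of_dvd (hm i) hd.1).trans_lt (Nat.div_lt_self hr0 (hp i).one_lt)⟩
  · obtain ⟨⟨k, hk⟩, hlt⟩ := Nat.mem_properDivisors.1 hd
    have hk1 : k ≠ 1 := by rintro rfl; omega
    obtain ⟨q, hq, hqk⟩ := Nat.exists_prime_and_dvd hk1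
    have hqr : q ∣ ∏ i, p i := hr ▸ hk ▸ hqk.mul_left d
    obtain ⟨i, -, hi⟩ := (hq.prime.dvd_finsetProd_iff _).1 hqr
    obtain rfl := (Nat.prime_dvd_prime_iff_eq hq (hp i)).1 hi
    obtain ⟨l, rfl⟩ := hqk
    refine dvd_trans ?_ (h i)
    have : r / p i = d * l := Nat.div_eq_of_eq_mul_left (hp i).pos (by rw [hk]; ring)
    rw [this]
    exact (cyclotomic.dvd_X_pow_sub_one d ℤ).trans (pow_one_sub_dvd_pow_mul_sub_one X d l)

section GroupRing

variable {G : Type*} [CommGroup G] [Fintype G]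

theorem aeval_of_eq_zero_iff (τ : G) (hτ : ∀ g : G, g ∈ Subgroup.zpowers τ) (f : ℤ[X]) :
    aeval (MonoidAlgebra.of ℤ G τ) f = 0 ↔ (X ^ Fintype.card G - 1 : ℤ[X]) ∣ f := by
  classical
  have hord : orderOf τ = Fintype.card G := by
    rw [orderOf_eq_card_of_forall_mem_zpowers hτ, Nat.card_eq_fintype_card]
  set r := Fintype.card G
  have hmon : (X ^ r - 1 : ℤ[X]).Monic := monic_X_pow_sub_C 1 Fintype.card_ne_zero
  have h0 : aeval (MonoidAlgebra.of ℤ G τ) (X ^ r - 1 : ℤ[X]) = 0 := by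
    rw [map_sub, map_pow, aeval_X, map_one, ← map_pow, ← hord, pow_orderOf_eq_one, map_one,
      sub_self]
  refine ⟨fun h => ?_, fun ⟨q, hq⟩ => by rw [hq, map_mul, h0, zero_mul]⟩
  rw [← modByMonic_eq_zero_iff_dvd hmon]
  set q := f %ₘ (X ^ r - 1) with hq
  have hqd : q.natDegree < r := by
    have := natDegree_modByMonic_lt f hmon (by
      intro h1
      have := congrArg natDegree h1
      have h2 : (X ^ r - 1 : ℤ[X]).natDegree = r := natDegree_X_pow_sub_C
      rw [h2, natDegree_one] at this
      exact Fintype.card_ne_zero this)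
    rwa [show (X ^ r - 1 : ℤ[X]).natDegree = r from natDegree_X_pow_sub_C] at this
  have hq0 : aeval (MonoidAlgebra.of ℤ G τ) q = 0 := by
    rw [hq, modByMonic_eq_sub_mul_div, map_sub, map_mul, h0, zero_mul, h, sub_zero]
  ext n
  rw [coeff_zero]
  by_cases hn : n < r
  · have := congrArg (fun x => MonoidAlgebra.coeff x (τ ^ n)) hq0
    rw [aeval_eq_sum_range' hqd] at this
    simp only [MonoidAlgebra.coeff_sum, Finsupp.finsetSum_apply, MonoidAlgebra.coeff_smul_apply,
      MonoidAlgebra.of_apply, MonoidAlgebra.single_pow, one_pow, MonoidAlgebra.coeff_single,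
      Finsupp.single_apply, MonoidAlgebra.coeff_zero, Finsupp.zero_apply] at this
    rw [Finset.sum_eq_single n] at this
    · simpa using this
    · intro b hb hbn
      rw [if_neg, smul_zero]
      intro h
      exact hbn (pow_injOn_Iio_orderOf (by simpa [hord] using hb) (by simpa [hord] using hn) h)
    · simp [hn]
  · exact coeff_eq_zero_of_natDegree_lt (by omega)

theorem aeval_of_surjective (τ : G) (hτ : ∀ g : G, g ∈ Subgroup.zpowers τ) :
    Function.Surjective (aeval (R := ℤ) (MonoidAlgebra.of ℤ G τ)) := by
  intro x
  induction x using MonoidAlgebra.induction_on with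
  | of g =>
    obtain ⟨n, rfl⟩ := (Submonoid.mem_powers_iff _ _).1 (mem_powers_iff_mem_zpowers.2 (hτ g))
    exact ⟨X ^ n, by simp⟩
  | add x y hx hy =>
    obtain ⟨f, rfl⟩ := hx
    obtain ⟨g, rfl⟩ := hy
    exact ⟨f + g, map_add _ _ _⟩
  | smul c x hx =>
    obtain ⟨f, rfl⟩ := hx
    exact ⟨c • f, map_smul _ _ _⟩

open Classical in
/-- The sum of the elements of a subgroup, in the integral group ring. -/
def subgroupSum (S : Subgroup G) : MonoidAlgebra ℤ G :=
  ∑ h with h ∈ S, MonoidAlgebra.of ℤ G h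

theorem aeval_of_geom_sum (τ : G) (hτ : ∀ g : G, g ∈ Subgroup.zpowers τ) (S : Subgroup G)
    {p m : ℕ} (hS : Nat.card S = p) (hm : Fintype.card G = p * m) :
    aeval (MonoidAlgebra.of ℤ G τ) (∑ k ∈ Finset.range p, ((X : ℤ[X]) ^ m) ^ k) =
      subgroupSum S := by
  classical
  have hord : orderOf τ = p * m := by
    rw [orderOf_eq_card_of_forall_mem_zpowers hτ, Nat.card_eq_fintype_card, hm]
  have hpos : 0 < p * m := hm ▸ Fintype.card_pos
  have hp : 0 < p := Nat.pos_of_mul_pos_right hpos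
  have hidx : S.index = m := by
    have := S.card_mul_index
    rw [hS, Nat.card_eq_fintype_card, hm] at this
    exact Nat.eq_of_mul_eq_mul_left hp this
  have hinj : Set.InjOn (fun k => (τ ^ m) ^ k) (Finset.range p : Set ℕ) := by
    intro a ha b hb hab
    simp only [← pow_mul, Finset.coe_range, Set.mem_Iio] at ha hb hab
    have hm0 : 0 < m := Nat.pos_of_mul_pos_left hpos
    have := pow_injOn_Iio_orderOf (x := τ) (x₁ := m * a) (x₂ := m * b)
      (by rw [hord, Set.mem_Iio, mul_comm p]; exact Nat.mul_lt_mul_of_pos_left ha hm0)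
      (by rw [hord, Set.mem_Iio, mul_comm p]; exact Nat.mul_lt_mul_of_pos_left hb hm0) hab
    exact Nat.eq_of_mul_eq_mul_left hm0 this
  have himg : (Finset.range p).image (fun k => (τ ^ m) ^ k) = ({h | h ∈ S} : Finset G) := by
    refine Finset.eq_of_subset_of_card_le (fun x hx => ?_) ?_
    · obtain ⟨k, -, rfl⟩ := Finset.mem_image.1 hx
      simpa using S.pow_mem (hidx ▸ S.pow_index_mem τ) k
    · rw [Finset.card_image_of_injOn hinj, Finset.card_range, ← hS, Nat.card_eq_fintype_card,
        Fintype.card_subtype]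
  rw [subgroupSum, ← himg, Finset.sum_image hinj]
  simp

theorem mem_span_PsiPoly_iff {ι : Type*} [Fintype ι] (p : ι → ℕ) (hp : ∀ i, (p i).Prime)
    (hcard : Fintype.card G = ∏ i, p i) (τ : G) (hτ : ∀ g : G, g ∈ Subgroup.zpowers τ)
    (H : ι → Subgroup G) (hH : ∀ i, Nat.card (H i) = p i) (y : MonoidAlgebra ℤ G) :
    y ∈ Ideal.span {aeval (MonoidAlgebra.of ℤ G τ) (PsiPoly (Fintype.card G))} ↔
      ∀ i, subgroupSum (H i) * y = 0 := by
  obtain ⟨f, rfl⟩ := aeval_of_surjective τ hτ y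
  have hpr (i : ι) : Fintype.card G = p i * (Fintype.card G / p i) :=
    (Nat.mul_div_cancel' (hcard ▸ Finset.dvd_prod_of_mem p (Finset.mem_univ i))).symm
  have hpsi : PsiPoly (Fintype.card G) ∣ X ^ Fintype.card G - 1 :=
    (PsiPoly_dvd_iff p hp hcard _).2 fun i => by
      conv_rhs => rw [hpr i, mul_comm]
      exact pow_one_sub_dvd_pow_mul_sub_one X _ _
  have hleft : aeval (MonoidAlgebra.of ℤ G τ) f ∈
      Ideal.span {aeval (MonoidAlgebra.of ℤ G τ) (PsiPoly (Fintype.card G))} ↔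
      PsiPoly (Fintype.card G) ∣ f := by
    rw [Ideal.mem_span_singleton]
    refine ⟨fun ⟨z, hz⟩ => ?_, fun h => map_dvd _ h⟩
    obtain ⟨q, rfl⟩ := aeval_of_surjective τ hτ z
    rw [← map_mul, ← sub_eq_zero, ← map_sub, aeval_of_eq_zero_iff τ hτ] at hz
    exact (dvd_sub_left (dvd_mul_right _ q)).1 (hpsi.trans hz)
  rw [hleft, PsiPoly_dvd_iff p hp hcard]
  refine forall_congr' fun i => ?_
  rw [← aeval_of_geom_sum τ hτ (H i) (hH i) (hpr i), ← map_mul, aeval_of_eq_zero_iff τ hτ]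
  set m := Fintype.card G / p i
  have hgeom : (X ^ Fintype.card G - 1 : ℤ[X]) =
      (∑ k ∈ Finset.range (p i), ((X : ℤ[X]) ^ m) ^ k) * (X ^ m - 1) := by
    rw [geom_sum_mul, ← pow_mul, mul_comm m, ← hpr i]
  rw [hgeom, mul_dvd_mul_iff_left]
  intro h0
  rw [h0, zero_mul] at hgeom
  exact (monic_X_pow_sub_C (1 : ℤ) Fintype.card_ne_zero).ne_zero (by simpa using hgeom)

theorem coeff_mul_eq_sum (x y : MonoidAlgebra ℤ G) (g : G) :
    (x * y).coeff g = ∑ h, x.coeff h * y.coeff (h⁻¹ * g) := by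
  classical
  rw [MonoidAlgebra.coeff_mul, Finsupp.sum_fintype _ _ (by simp)]
  refine Finset.sum_congr rfl fun h _ => ?_
  rw [Finsupp.sum_fintype _ _ (by simp), Finset.sum_eq_single (h⁻¹ * g)]
  · simp
  · intro b _ hb
    exact if_neg fun h' => hb (by rw [← h', inv_mul_cancel_left])
  · simp

open Classical in
theorem coeff_subgroupSum (S : Subgroup G) (g : G) :
    (subgroupSum S).coeff g = if g ∈ S then 1 else 0 := by
  simp [subgroupSum, Finsupp.finsetSum_apply, MonoidAlgebra.coeff_single, Finsupp.single_apply]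

open Classical in
theorem subgroupSum_mul_eq_zero_iff (S : Subgroup G) (y : MonoidAlgebra ℤ G) :
    subgroupSum S * y = 0 ↔ ∀ g, ∑ h with h ∈ S, y.coeff (g * h) = 0 := by
  rw [MonoidAlgebra.ext_iff, DFunLike.ext_iff]
  refine forall_congr' fun g => ?_
  rw [coeff_mul_eq_sum, MonoidAlgebra.coeff_zero, Finsupp.zero_apply]
  simp only [coeff_subgroupSum, ite_mul, one_mul, zero_mul]
  rw [← Equiv.sum_comp (Equiv.inv G), ← Finset.sum_filter]
  simp [mul_comm g]

theorem of_mul_subgroupSum (S : Subgroup G) {h : G} (hh : h ∈ S) :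
    MonoidAlgebra.of ℤ G h * subgroupSum S = subgroupSum S := by
  classical
  rw [subgroupSum, Finset.mul_sum]
  refine Finset.sum_equiv (Equiv.mulLeft h) (fun x => ?_) fun x _ => ?_
  · simp [S.mul_mem_cancel_left hh]
  · simp

theorem subgroupSum_mul_self (S : Subgroup G) :
    subgroupSum S * subgroupSum S = (Nat.card S : MonoidAlgebra ℤ G) * subgroupSum S := by
  classical
  conv_lhs => enter [1]; rw [subgroupSum]
  rw [Finset.sum_mul, Finset.sum_congr rfl fun h hh =>
    of_mul_subgroupSum S (Finset.mem_filter.1 hh).2, Finset.sum_const, nsmul_eq_mul,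
    Nat.card_eq_fintype_card, Fintype.card_subtype]

end GroupRing

theorem coeff_map_perm {G : Type*} [CommGroup G] (σ : Equiv.Perm G)
    (σhat : MonoidAlgebra ℤ G ≃ₗ[ℤ] MonoidAlgebra ℤ G)
    (hσ : ∀ g : G, σhat (MonoidAlgebra.of ℤ G g) = MonoidAlgebra.of ℤ G (σ g))
    (y : MonoidAlgebra ℤ G) (g : G) : (σhat y).coeff (σ g) = y.coeff g := by
  classical
  induction y using MonoidAlgebra.induction_on with
  | of h => rw [hσ]; simp [MonoidAlgebra.coeff_single, Finsupp.single_apply, σ.injective.eq_iff]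
  | add x y hx hy => simp [hx, hy]
  | smul c x hx => rw [map_smul, MonoidAlgebra.coeff_smul_apply, hx, MonoidAlgebra.coeff_smul_apply]

section Projections

variable {G ι : Type*} [CommGroup G] [Fintype ι]

/-- The homomorphisms `π i : G →* G` are the projections of an internal direct product
decomposition of `G` with factors `H i`. -/
structure IsProjections (H : ι → Subgroup G) (π : ι → G →* G) : Prop where
  mem (i : ι) (g : G) : π i g ∈ H i
  prod_eq (g : G) : ∏ i, π i g = g
  apply_self {i : ι} {h : G} (hh : h ∈ H i) : π i h = h
  apply_of_ne {i j : ι} (hij : i ≠ j) {h : G} (hh : h ∈ H i) : π j h = 1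

namespace IsProjections

variable {H : ι → Subgroup G} {π : ι → G →* G}

theorem ext (hπ : IsProjections H π) {g g' : G} (h : ∀ i, π i g = π i g') : g = g' := by
  rw [← hπ.prod_eq g, ← hπ.prod_eq g', Finset.prod_congr rfl fun i _ => h i]

theorem apply_prod (hπ : IsProjections H π) {a : ι → G} (ha : ∀ i, a i ∈ H i) (j : ι) :
    π j (∏ i, a i) = a j := by
  rw [map_prod, Finset.prod_eq_single j (fun i _ hij => hπ.apply_of_ne hij (ha i)) (by simp),
    hπ.apply_self (ha j)]

theorem mem_iff (hπ : IsProjections H π) {i : ι} {g : G} : g ∈ H i ↔ ∀ j, j ≠ i → π j g = 1 := by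
  refine ⟨fun h j hj => hπ.apply_of_ne hj.symm h, fun h => ?_⟩
  have := hπ.prod_eq g
  rw [Finset.prod_eq_single i (fun j _ hj => h j hj) (by simp)] at this
  exact this ▸ hπ.mem i g

/-- The bijection between the product of the factors and the group. -/
def piEquiv (hπ : IsProjections H π) : ((i : ι) → H i) ≃ G where
  toFun f := ∏ i, (f i : G)
  invFun g i := ⟨π i g, hπ.mem i g⟩
  left_inv f := funext fun i => Subtype.ext (hπ.apply_prod (fun i => (f i).2) i)
  right_inv g := hπ.prod_eq g

end IsProjections

open Classical in
/-- Up to the factor `|G|`, the kernel of the orthogonal projection onto the elements of `ℤ[G]`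
all of whose `H i`-coset sums vanish. -/
def projKernel (H : ι → Subgroup G) (π : ι → G →* G) (g : G) : ℤ :=
  ∏ i, if π i g = 1 then (Nat.card (H i) : ℤ) - 1 else -1

theorem projKernel_inv (H : ι → Subgroup G) (π : ι → G →* G) (g : G) :
    projKernel H π g⁻¹ = projKernel H π g := by
  exact Finset.prod_congr rfl fun i _ => by rw [map_inv]; congr 1; rw [inv_eq_one]

variable [Fintype G]

/-- The element of `ℤ[G]` acting on the elements with vanishing coset sums as `|G|`. -/
def projElement (H : ι → Subgroup G) : MonoidAlgebra ℤ G :=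
  ∏ i, ((Nat.card (H i) : MonoidAlgebra ℤ G) - subgroupSum (H i))

theorem subgroupSum_mul_projElement (H : ι → Subgroup G) (i : ι) :
    subgroupSum (H i) * projElement H = 0 := by
  classical
  rw [projElement, ← Finset.mul_prod_erase _ _ (Finset.mem_univ i), ← mul_assoc, mul_sub,
    subgroupSum_mul_self, mul_comm, sub_eq_zero.2 (mul_comm _ _), mul_zero]

theorem projElement_mul (H : ι → Subgroup G) {y : MonoidAlgebra ℤ G}
    (hy : ∀ i, subgroupSum (H i) * y = 0) :
    projElement H * y = ((∏ i, Nat.card (H i) : ℕ) : MonoidAlgebra ℤ G) * y := by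
  classical
  rw [projElement, Nat.cast_prod]
  induction (Finset.univ : Finset ι) using Finset.induction_on with
  | empty => simp
  | insert i s hi ih =>
    rw [Finset.prod_insert hi, Finset.prod_insert hi, mul_assoc, ih, mul_left_comm, sub_mul, hy,
      sub_zero, mul_left_comm, mul_assoc]

theorem coeff_projElement {H : ι → Subgroup G} {π : ι → G →* G} (hπ : IsProjections H π) (g : G) :
    (projElement H).coeff g = projKernel H π g := by
  classical
  have hfac (i : ι) : (Nat.card (H i) : MonoidAlgebra ℤ G) - subgroupSum (H i) =
      ∑ h : H i, MonoidAlgebra.single (h : G)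
        (if (h : G) = 1 then (Nat.card (H i) : ℤ) - 1 else -1) := by
    ext g
    rw [MonoidAlgebra.coeff_sub, Finsupp.sub_apply, coeff_subgroupSum, MonoidAlgebra.natCast_def,
      MonoidAlgebra.coeff_single, Finsupp.single_apply, MonoidAlgebra.coeff_sum, Finsupp.finsetSum_apply]
    simp only [MonoidAlgebra.coeff_single, Finsupp.single_apply]
    by_cases hg : g ∈ H i
    · rw [Finset.sum_eq_single ⟨g, hg⟩]
      · by_cases h1 : g = 1 <;> simp [hg, h1, eq_comm]
      · intro b _ hb
        exact if_neg fun h => hb (Subtype.ext h)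
      · simp
    · rw [Finset.sum_eq_zero]
      · have : 1 ≠ g := by rintro rfl; exact hg (H i).one_mem
        simp [hg, this]
      · intro b _
        exact if_neg fun h : (b : G) = g => hg (h ▸ b.2)
  rw [projElement, Finset.prod_congr rfl fun i _ => hfac i, Fintype.prod_sum,
    MonoidAlgebra.coeff_sum, Finsupp.finsetSum_apply]
  simp only [MonoidAlgebra.prod_single, MonoidAlgebra.coeff_single, Finsupp.single_apply]
  rw [Finset.sum_eq_single (hπ.piEquiv.symm g)]
  · exact if_pos (hπ.piEquiv.apply_symm_apply g)
  · intro f _ hf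
    exact if_neg fun h => hf (by rw [← h]; exact (hπ.piEquiv.symm_apply_apply f).symm)
  · simp

/-- The reproducing property of `projKernel`. -/
theorem sum_projKernel_mul {H : ι → Subgroup G} {π : ι → G →* G} (hπ : IsProjections H π)
    {y : MonoidAlgebra ℤ G} (hy : ∀ i, subgroupSum (H i) * y = 0) (g : G) :
    ∑ h, projKernel H π (g⁻¹ * h) * y.coeff h = (∏ i, Nat.card (H i) : ℕ) * y.coeff g := by
  have h1 := congrArg (fun x => MonoidAlgebra.coeff x g) (projElement_mul H hy)
  simp only [← nsmul_eq_mul, coeff_mul_eq_sum, coeff_projElement hπ] at h1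
  rw [MonoidAlgebra.coeff_smul_apply, nsmul_eq_mul] at h1
  rw [← h1, ← Equiv.sum_comp ((Equiv.inv G).trans (Equiv.mulRight g))]
  refine Finset.sum_congr rfl fun h _ => ?_
  rw [← projKernel_inv H π h]
  simp [mul_comm]

theorem coeff_of_mul_projElement {H : ι → Subgroup G} {π : ι → G →* G} (hπ : IsProjections H π)
    (g h : G) :
    (MonoidAlgebra.of ℤ G g * projElement H).coeff h = projKernel H π (g⁻¹ * h) := by
  rw [MonoidAlgebra.of_apply, MonoidAlgebra.coeff_single_mul_eq_mul_coeff (g⁻¹ * h)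
    (fun x _ => eq_inv_mul_iff_mul_eq.symm), one_mul, coeff_projElement hπ]

theorem subgroupSum_mul_of_mul_projElement (H : ι → Subgroup G) (i : ι) (g : G) :
    subgroupSum (H i) * (MonoidAlgebra.of ℤ G g * projElement H) = 0 := by
  rw [mul_left_comm, subgroupSum_mul_projElement, mul_zero]

/-- A permutation preserving the elements with vanishing coset sums preserves the kernel. -/
theorem projKernel_perm {H : ι → Subgroup G} {π : ι → G →* G} (hπ : IsProjections H π)
    (σ : Equiv.Perm G) (σhat : MonoidAlgebra ℤ G ≃ₗ[ℤ] MonoidAlgebra ℤ G)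
    (hσ : ∀ g : G, σhat (MonoidAlgebra.of ℤ G g) = MonoidAlgebra.of ℤ G (σ g))
    (hI : ∀ y, (∀ i, subgroupSum (H i) * y = 0) → ∀ i, subgroupSum (H i) * σhat y = 0) (g g' : G) :
    projKernel H π ((σ g)⁻¹ * σ g') = projKernel H π (g⁻¹ * g') := by
  set u := MonoidAlgebra.of ℤ G g * projElement H
  have hu := subgroupSum_mul_of_mul_projElement H (g := g)
  have hKu (h : G) : u.coeff h = projKernel H π (g⁻¹ * h) := coeff_of_mul_projElement hπ g h
  have hKv (h : G) : (σhat u).coeff (σ h) = projKernel H π (g⁻¹ * h) := by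
    rw [coeff_map_perm σ σhat hσ, hKu]
  have h1 := sum_projKernel_mul hπ hu g
  have h2 := sum_projKernel_mul hπ (hI u hu) (σ g)
  have h3 := sum_projKernel_mul hπ (subgroupSum_mul_of_mul_projElement H (g := σ g)) (σ g)
  rw [← Equiv.sum_comp σ] at h2 h3
  rw [hKv] at h2
  rw [hKu] at h1
  simp only [hKv] at h2
  simp only [coeff_of_mul_projElement hπ, inv_mul_cancel] at h1 h2 h3
  have h4 : ∑ h, (projKernel H π ((σ g)⁻¹ * σ h) - projKernel H π (g⁻¹ * h)) ^ 2 = 0 := by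
    have (a b : ℤ) : (a - b) ^ 2 = a * a - 2 * (a * b) + b * b := by ring
    simp only [this, Finset.sum_add_distrib, Finset.sum_sub_distrib, ← Finset.mul_sum, h1, h2, h3]
    ring
  have h5 := (Finset.sum_eq_zero_iff_of_nonneg fun h _ => sq_nonneg _).1 h4 g' (Finset.mem_univ _)
  exact sub_eq_zero.1 (pow_eq_zero_iff two_ne_zero |>.1 h5)

end Projections

section CosetPermutations

variable {G : Type*} [CommGroup G]

/-- The map `f` sends each coset of `S` into a coset of `S`. -/
def MapsCosets (S : Subgroup G) (f : G → G) : Prop :=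
  ∀ g, ∀ h ∈ S, (f g)⁻¹ * f (g * h) ∈ S

theorem MapsCosets.exists_eq [Finite G] {S : Subgroup G} {σ : Equiv.Perm G}
    (hσ : MapsCosets S σ) (g : G) {h : G} (hh : h ∈ S) : ∃ h' ∈ S, σ (g * h') = σ g * h := by
  have hinj : Function.Injective fun x : S => (⟨(σ g)⁻¹ * σ (g * x), hσ g x x.2⟩ : S) := by
    intro x y hxy
    simpa using hxy
  obtain ⟨x, hx⟩ := Finite.surjective_of_injective hinj ⟨h, hh⟩
  exact ⟨x, x.2, inv_mul_eq_iff_eq_mul.1 (congrArg Subtype.val hx)⟩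

theorem MapsCosets.symm [Finite G] {S : Subgroup G} {σ : Equiv.Perm G}
    (hσ : MapsCosets S σ) : MapsCosets S σ.symm := by
  intro g h hh
  obtain ⟨h', hh', he⟩ := hσ.exists_eq (σ.symm g) hh
  rw [Equiv.apply_symm_apply] at he
  rwa [← he, Equiv.symm_apply_apply, inv_mul_cancel_left]

/-- A permutation mapping cosets of `S` to cosets of `S` preserves the elements of `ℤ[G]` with
vanishing `S`-coset sums. -/
theorem MapsCosets.subgroupSum_mul_eq_zero [Fintype G] {S : Subgroup G} {σ : Equiv.Perm G}
    (hσ : MapsCosets S σ) (σhat : MonoidAlgebra ℤ G ≃ₗ[ℤ] MonoidAlgebra ℤ G)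
    (hσhat : ∀ g : G, σhat (MonoidAlgebra.of ℤ G g) = MonoidAlgebra.of ℤ G (σ g))
    {y : MonoidAlgebra ℤ G} (hy : subgroupSum S * y = 0) : subgroupSum S * σhat y = 0 := by
  classical
  rw [subgroupSum_mul_eq_zero_iff] at hy ⊢
  intro g
  obtain ⟨a, rfl⟩ := σ.surjective g
  rw [← hy a]
  symm
  refine Finset.sum_bij (fun h _ => (σ a)⁻¹ * σ (a * h)) (fun h hh => ?_) (fun x _ z _ h => ?_)
    (fun h hh => ?_) fun h _ => ?_
  · simpa using hσ a h (by simpa using hh)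
  · simpa using h
  · obtain ⟨h', hh', he⟩ := hσ.exists_eq a (h := h) (by simpa using hh)
    exact ⟨h', by simpa using hh', by rw [he, inv_mul_cancel_left]⟩
  · rw [mul_inv_cancel_left, coeff_map_perm σ σhat hσhat]

variable {ι : Type*} [Fintype ι] {H : ι → Subgroup G} {π : ι → G →* G}

theorem IsProjections.apply_mul_prod (hπ : IsProjections H π) {f : G → G} {s : Finset ι} {i : ι}
    (hi : i ∉ s) (hf : ∀ j ∈ s, MapsCosets (H j) f) {d : ι → G} (hd : ∀ j, d j ∈ H j) (a : G) :
    π i (f (a * ∏ j ∈ s, d j)) = π i (f a) := by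
  classical
  induction s using Finset.induction_on with
  | empty => simp
  | insert j s hj ih =>
    rw [Finset.mem_insert, not_or] at hi
    rw [← ih hi.2 fun k hk => hf k (Finset.mem_insert_of_mem hk), Finset.prod_insert hj,
      mul_comm (d j), ← mul_assoc]
    have := hπ.apply_of_ne (Ne.symm hi.1)
      (hf j (Finset.mem_insert_self j s) (a * ∏ k ∈ s, d k) (d j) (hd j))
    rwa [map_mul, map_inv, inv_mul_eq_one, eq_comm] at this

/-- A map sending cosets of each factor to cosets of that factor acts coordinatewise. -/
theorem IsProjections.apply_eq_of_mapsCosets (hπ : IsProjections H π) {f : G → G}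
    (hf : ∀ i, MapsCosets (H i) f) (i : ι) (g : G) : π i (f g) = π i (f (π i g)) := by
  classical
  conv_lhs => rw [← hπ.prod_eq g, ← Finset.mul_prod_erase _ _ (Finset.mem_univ i)]
  exact hπ.apply_mul_prod (Finset.notMem_erase i _) (fun j _ => hf j) (fun j => hπ.mem j g) _

/-- A permutation is a product of permutations of the factors if and only if it maps cosets of each
factor to cosets of that factor. -/
theorem IsProjections.exists_bijOn_iff [Finite G] (hπ : IsProjections H π) (σ : Equiv.Perm G) :
    (∃ τs : ι → G → G, (∀ i, Set.BijOn (τs i) (H i) (H i)) ∧ ∀ g, σ g = ∏ i, τs i (π i g)) ↔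
      ∀ i, MapsCosets (H i) σ := by
  constructor
  · rintro ⟨τs, hτs, hσ⟩ i g h hh
    have hcoord (g : G) (j : ι) : π j (σ g) = τs j (π j g) := by
      rw [hσ, hπ.apply_prod fun i => (hτs i).mapsTo (hπ.mem i g)]
    refine hπ.mem_iff.2 fun j hj => ?_
    rw [map_mul, map_inv, hcoord, hcoord, map_mul, hπ.apply_of_ne hj.symm hh, mul_one,
      inv_mul_cancel]
  · intro hσ
    refine ⟨fun i g => π i (σ g), fun i => ?_, fun g => ?_⟩
    · have hmaps : Set.MapsTo (fun g => π i (σ g)) (H i) (H i) := fun g _ => hπ.mem i _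
      have hinj : Set.InjOn (fun g => π i (σ g)) (H i) := by
        intro x hx y hy hxy
        refine σ.injective (hπ.ext fun j => ?_)
        by_cases hj : j = i
        · exact hj ▸ hxy
        · rw [hπ.apply_eq_of_mapsCosets hσ j x, hπ.apply_eq_of_mapsCosets hσ j y,
            hπ.apply_of_ne (Ne.symm hj) hx, hπ.apply_of_ne (Ne.symm hj) hy]
      exact ((Set.toFinite _).injOn_iff_bijOn_of_mapsTo hmaps).1 hinj
    · conv_lhs => rw [← hπ.prod_eq (σ g)]
      exact Finset.prod_congr rfl fun i _ => hπ.apply_eq_of_mapsCosets hσ i g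

open Classical in
/-- The coordinates of `g` that are not trivial. -/
def coordSupport (π : ι → G →* G) (g : G) : Finset ι := {i | π i g ≠ 1}

theorem projKernel_mul_prod (H : ι → Subgroup G) (π : ι → G →* G) (g : G) :
    projKernel H π g * ∏ i ∈ coordSupport π g, ((Nat.card (H i) : ℤ) - 1) =
      (-1) ^ (coordSupport π g).card * ∏ i, ((Nat.card (H i) : ℤ) - 1) := by
  classical
  rw [projKernel, coordSupport, Finset.prod_filter, ← Finset.prod_const, Finset.prod_filter,
    ← Finset.prod_mul_distrib, ← Finset.prod_mul_distrib]
  refine Finset.prod_congr rfl fun i _ => ?_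
  by_cases h : π i g = 1 <;> simp [h]

/-- Let the factors have distinct prime orders. An element with the same kernel value as an element
supported at `i` is itself supported at `i`, or only at factors of smaller order. -/
theorem coordSupport_eq_or_lt {p : ι → ℕ} (hp : ∀ i, (p i).Prime)
    (hpinj : Function.Injective p) (hH : ∀ i, Nat.card (H i) = p i) {g g' : G} {i : ι}
    (hg : coordSupport π g = {i}) (hgg' : projKernel H π g' = projKernel H π g) :
    coordSupport π g' = {i} ∨ ∀ j ∈ coordSupport π g', p j < p i := by
  classical
  have h1 := projKernel_mul_prod H π g
  have h2 := projKernel_mul_prod H π g'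
  simp only [hH, hg, Finset.prod_singleton, Finset.card_singleton, hgg'] at h1 h2
  set s := coordSupport π g'
  have hpos (j : ι) : (0 : ℤ) < p j - 1 := by have := (hp j).one_lt; lia
  have hM : (0 : ℤ) < ∏ i, ((p i : ℤ) - 1) := Finset.prod_pos fun j _ => hpos j
  have hs : (0 : ℤ) < ∏ j ∈ s, ((p j : ℤ) - 1) := Finset.prod_pos fun j _ => hpos j
  have h3 : ∏ j ∈ s, ((p j : ℤ) - 1) = -(-1) ^ s.card * (p i - 1) := by
    have := hpos i
    refine mul_left_cancel₀ hM.ne' ?_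
    linear_combination (∏ j ∈ s, ((p j : ℤ) - 1)) * h1 - ((p i : ℤ) - 1) * h2
  rcases Nat.even_or_odd s.card with hev | hodd
  · rw [hev.neg_one_pow] at h3
    nlinarith [hpos i]
  rw [hodd.neg_one_pow, neg_neg, one_mul] at h3
  by_cases his : i ∈ s
  · left
    rw [← Finset.mul_prod_erase _ _ his] at h3
    have h4 : ∏ j ∈ s.erase i, ((p j : ℤ) - 1) = 1 :=
      mul_left_cancel₀ (hpos i).ne' (h3.trans (mul_one _).symm)
    have h5 (j) (hj : j ∈ s.erase i) : p j = 2 := by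
      have h6 : ((p j : ℤ) - 1) ∣ 1 :=
        (Finset.dvd_prod_of_mem (fun j => (p j : ℤ) - 1) hj).trans h4.dvd
      have := Int.le_of_dvd one_pos h6
      have := hpos j
      lia
    have h7 : (s.erase i).card ≤ 1 :=
      Finset.card_le_one.2 fun a ha b hb => hpinj ((h5 a ha).trans (h5 b hb).symm)
    have h8 := Finset.card_erase_add_one his
    have h9 : s.card = 1 := by
      obtain ⟨k, hk⟩ := hodd
      lia
    obtain ⟨j, hj⟩ := Finset.card_eq_one.1 h9
    rw [hj, Finset.mem_singleton] at his
    rw [hj, his]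
  · right
    intro j hj
    have h6 : ((p j : ℤ) - 1) ∣ p i - 1 :=
      (Finset.dvd_prod_of_mem (fun j => (p j : ℤ) - 1) hj).trans h3.dvd
    have h7 := Int.le_of_dvd (hpos i) h6
    have h8 : p j ≠ p i := fun h => his (hpinj h ▸ hj)
    lia

/-- If the factors have distinct prime orders, a permutation preserving the kernel maps cosets of
each factor to cosets of that factor. -/
theorem IsProjections.mapsCosets_of_projKernel [Finite G] (hπ : IsProjections H π) {p : ι → ℕ}
    (hp : ∀ i, (p i).Prime) (hpinj : Function.Injective p) (hH : ∀ i, Nat.card (H i) = p i)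
    {σ : Equiv.Perm G}
    (hσ : ∀ g g', projKernel H π ((σ g)⁻¹ * σ g') = projKernel H π (g⁻¹ * g')) (i : ι) :
    MapsCosets (H i) σ := by
  classical
  induction hn : p i using Nat.strong_induction_on generalizing i with
  | _ n ih =>
  subst hn
  intro g h hh
  by_cases h1 : h = 1
  · simp [h1]
  have hih : π i h ≠ 1 := by rwa [hπ.apply_self hh]
  have hsupp : coordSupport π h = {i} := by
    ext j
    simp only [coordSupport, Finset.mem_filter, Finset.mem_univ, true_and, Finset.mem_singleton]
    refine ⟨fun hj => ?_, fun hj => hj ▸ hih⟩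
    by_contra hji
    exact hj (hπ.apply_of_ne (Ne.symm hji) hh)
  have hker := hσ g (g * h)
  rw [inv_mul_cancel_left] at hker
  set d := (σ g)⁻¹ * σ (g * h) with hd
  rcases coordSupport_eq_or_lt hp hpinj hH hsupp hker with h2 | h2
  · refine hπ.mem_iff.2 fun j hj => ?_
    by_contra h3
    have h4 : j ∈ coordSupport π d := by simp [coordSupport, h3]
    rw [h2, Finset.mem_singleton] at h4
    exact hj h4
  · exfalso
    have hprod : ∏ j ∈ coordSupport π d, π j d = d := by
      conv_rhs => rw [← hπ.prod_eq d]
      exact Finset.prod_filter_ne_one _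
    have h3 := hπ.apply_mul_prod (f := σ.symm) (s := coordSupport π d) (i := i)
      (fun hi => lt_irrefl _ (h2 i hi)) (fun j hj => (ih _ (h2 j hj) j rfl).symm)
      (fun j => hπ.mem j d) (σ g)
    rw [hprod, hd, mul_inv_cancel_left, Equiv.symm_apply_apply, Equiv.symm_apply_apply, map_mul,
      mul_eq_left] at h3
    exact hih h3

/-- A family of coordinate maps for subgroups whose orders multiply to `|G|` consists of the
projections of an internal direct product. -/
theorem exists_isProjections [Fintype G] (hcard : Fintype.card G = ∏ i, Nat.card (H i))
    (π : ι → G → G) (hπmem : ∀ i g, π i g ∈ H i) (hπ : ∀ g, g = ∏ i, π i g) :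
    ∃ ρ : ι → G →* G, IsProjections H ρ ∧ ∀ i g, ρ i g = π i g := by
  classical
  have hbij : Function.Bijective fun f : (i : ι) → H i => ∏ i, (f i : G) := by
    rw [Fintype.bijective_iff_surjective_and_card]
    refine ⟨fun g => ⟨fun i => ⟨π i g, hπmem i g⟩, (hπ g).symm⟩, ?_⟩
    rw [Fintype.card_pi, hcard]
    exact Finset.prod_congr rfl fun i _ => Nat.card_eq_fintype_card.symm
  have huniq {a : ι → G} (ha : ∀ i, a i ∈ H i) (i : ι) : π i (∏ j, a j) = a i := by
    have := @hbij.1 (fun i => ⟨π i (∏ j, a j), hπmem i _⟩) (fun i => ⟨a i, ha i⟩) (hπ _).symm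
    exact congrArg Subtype.val (congrFun this i)
  have hsingle {i : ι} {h : G} (hh : h ∈ H i) (j : ι) : π j h = if j = i then h else 1 := by
    have := huniq (a := fun j => if j = i then h else 1) (fun j => by
      split_ifs with hj
      · exact hj ▸ hh
      · exact (H j).one_mem) j
    simpa using this
  refine ⟨fun i => MonoidHom.mk' (π i) fun a b => ?_, ⟨hπmem, fun g => (hπ g).symm, ?_, ?_⟩,
    fun _ _ => rfl⟩
  · conv_lhs => rw [hπ a, hπ b, ← Finset.prod_mul_distrib]
    exact huniq (fun j => (H j).mul_mem (hπmem j a) (hπmem j b)) i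
  · intro i h hh
    simpa using hsingle hh i
  · intro i j hij h hh
    simpa [hij.symm] using hsingle hh j

end CosetPermutations

/-- Let `G` be cyclic of squarefree order `r = p_1⋯p_t`
(distinct primes), with generator `τ`, and `I := Ψ_r(τ)·ℤ[G]`.  Let `H_i` be
the subgroup of order `p_i` and `π_i : G → H_i` the projections for the
internal direct product decomposition `G = H_1 × ⋯ × H_t`.  For a
permutation `σ` of `G`, with `σ̂` the induced `ℤ`-linear automorphism of
`ℤ[G]`, one has `σ̂(I) ⊆ I` iff there are permutations `τ_i` of the sets
`H_i` with `σ(g) = τ_1(π_1(g))⋯τ_t(π_t(g))` for all `g`. -/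
theorem stmt_17 (t : ℕ) (p : Fin t → ℕ) (hp : ∀ i, (p i).Prime)
    (hpinj : Function.Injective p) (r : ℕ) (hr : r = ∏ i, p i)
    (G : Type*) [CommGroup G] [Fintype G]
    (hcard : Fintype.card G = r) (τ : G) (hτ : ∀ g : G, g ∈ Subgroup.zpowers τ)
    (H : Fin t → Subgroup G) (hH : ∀ i, Nat.card (H i) = p i)
    (π : Fin t → G → G) (hπmem : ∀ (i : Fin t) (g : G), π i g ∈ H i)
    (hπ : ∀ g : G, g = ∏ i, π i g)
    (σ : Equiv.Perm G)
    (σhat : MonoidAlgebra ℤ G ≃ₗ[ℤ] MonoidAlgebra ℤ G)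
    (hσhat : ∀ g : G, σhat (MonoidAlgebra.of ℤ G g) = MonoidAlgebra.of ℤ G (σ g)) :
    let I : Ideal (MonoidAlgebra ℤ G) :=
      Ideal.span {Polynomial.aeval (MonoidAlgebra.of ℤ G τ) (PsiPoly r)}
    (∀ x ∈ I, σhat x ∈ I) ↔
      ∃ τs : Fin t → G → G,
        (∀ i, Set.BijOn (τs i) (H i) (H i)) ∧
        ∀ g : G, σ g = ∏ i, τs i (π i g) := by
  intro I
  subst hr
  obtain ⟨ρ, hρ, hρπ⟩ := exists_isProjections (H := H) (by simp only [hH, hcard]) π hπmem hπ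
  have hmem (y : MonoidAlgebra ℤ G) : y ∈ I ↔ ∀ i, subgroupSum (H i) * y = 0 := by
    rw [← mem_span_PsiPoly_iff p hp hcard τ hτ H hH, hcard]
  simp only [← hρπ, hmem]
  rw [hρ.exists_bijOn_iff]
  refine ⟨fun h i => ?_, fun h y hy i => ?_⟩
  · exact hρ.mapsCosets_of_projKernel hp hpinj hH (projKernel_perm hρ σ σhat hσhat h) i
  · exact (h i).subgroupSum_mul_eq_zero σhat hσhat (hy i)

end
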